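/- arXiv:2001.02751 — 10 statements merged into one kernel-verified Lean document; each statement's English description precedes it below -/
import Mathlib

section
/- Let X be a nonempty set and f : X → X. Then f is completely regular in the semigroup of all self-maps of X under composition (i.e., there exists g : X → X with f ∘ g ∘ f = f and f ∘ g = g ∘ f) if and only if the restriction of f to its image f(X) is a bijection of f(X) onto f(X). Moreover, in this case f(X) = f(f(X)). -/
/-- For a self-map `f` of a nonempty set `X`, `f` is completely regular in the
semigroup of self-maps under composition iff the restriction of `f` to its image is a
bijection of the image onto itself; moreover in this case `f(X) = f(f(X))`. -/
theorem stmt_0 {X : Type*} [Nonempty X] (f : X → X) :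
    ((∃ g : X → X, f ∘ g ∘ f = f ∧ f ∘ g = g ∘ f) ↔
      Set.BijOn f (Set.range f) (Set.range f)) ∧
    ((∃ g : X → X, f ∘ g ∘ f = f ∧ f ∘ g = g ∘ f) →
      Set.range f = f '' Set.range f) := by
  have key : (∃ g : X → X, f ∘ g ∘ f = f ∧ f ∘ g = g ∘ f) ↔
      Set.BijOn f (Set.range f) (Set.range f) := by
    constructor
    · rintro ⟨g, h1, h2⟩
      have h1 : ∀ x, f (g (f x)) = f x := fun x => congrFun h1 x
      have h2 : ∀ x, f (g x) = g (f x) := fun x => congrFun h2 x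
      refine ⟨?_, ?_, ?_⟩
      · rintro _ ⟨x, rfl⟩
        exact ⟨f x, rfl⟩
      · rintro _ ⟨x, rfl⟩ _ ⟨y, rfl⟩ h
        have h3 : g (f (f x)) = g (f (f y)) := congrArg g h
        rwa [← h2 (f x), ← h2 (f y), h1, h1] at h3
      · rintro _ ⟨x, rfl⟩
        refine ⟨f (g x), ⟨g x, rfl⟩, ?_⟩
        rw [h2, h1]
    · rintro ⟨_, hi, hs⟩
      have hk : ∀ x, ∃ y, y ∈ Set.range f ∧ f y = f x := fun x => hs ⟨x, rfl⟩
      choose k hk1 hk2 using hk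
      have hl : ∀ x, ∃ y, y ∈ Set.range f ∧ f y = k x := fun x => hs (hk1 x)
      choose l hl1 hl2 using hl
      have hkf : ∀ x, k (f x) = f x := fun x => hi (hk1 _) ⟨x, rfl⟩ (hk2 _)
      refine ⟨l, funext fun x => ?_, funext fun x => ?_⟩
      · change f (l (f x)) = f x
        rw [hl2, hkf]
      · change f (l x) = l (f x)
        rw [hl2]
        apply hi (hk1 _) (hl1 _)
        rw [hk2, hl2, hkf]
  exact ⟨key, fun h => ((key.1 h).image_eq).symm⟩
end

section
/- Let S be a completely simple semigroup (a semigroup with no proper two-sided ideal that contains a minimal idempotent) which is the union S = S₁ ∪ S₂ of two left simple subsemigroups S₁ and S₂. Then either S itself is left simple, or the union is disjoint (S₁ ∩ S₂ = ∅) and S₁ and S₂ are precisely the minimal left ideals of S. -/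
/-- A left ideal of a semigroup `S`: a nonempty subset `L` with `S L ⊆ L`. -/
def IsLeftIdeal {S : Type*} [Semigroup S] (L : Set S) : Prop :=
  L.Nonempty ∧ ∀ s : S, ∀ a ∈ L, s * a ∈ L

/-- A two-sided ideal of a semigroup `S`. -/
def IsTwoSidedIdealSet {S : Type*} [Semigroup S] (I : Set S) : Prop :=
  I.Nonempty ∧ ∀ s : S, ∀ a ∈ I, s * a ∈ I ∧ a * s ∈ I

/-- A minimal left ideal of a semigroup `S`. -/
def IsMinLeftIdeal {S : Type*} [Semigroup S] (L : Set S) : Prop :=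
  IsLeftIdeal L ∧ ∀ L' : Set S, IsLeftIdeal L' → L' ⊆ L → L' = L

/-- A subsemigroup (as a subset): nonempty and closed under multiplication. -/
def IsSubsemigroupSet {S : Type*} [Semigroup S] (T : Set S) : Prop :=
  T.Nonempty ∧ ∀ a ∈ T, ∀ b ∈ T, a * b ∈ T

/-- A subset `T` of a semigroup is left simple (as a semigroup in its own right):
it has no proper left ideal. -/
def LeftSimpleIn {S : Type*} [Semigroup S] (T : Set S) : Prop :=
  ∀ L : Set S, L.Nonempty → L ⊆ T → (∀ s ∈ T, ∀ a ∈ L, s * a ∈ L) → L = T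

theorem aux_sub {S : Type*} [Semigroup S] {T L : Set S} (h : IsSubsemigroupSet T)
    (hls : LeftSimpleIn T) (hL : IsLeftIdeal L) {x : S} (hxL : x ∈ L) (hxT : x ∈ T) : T ⊆ L := by
  have := hls (L ∩ T) ⟨x, hxL, hxT⟩ Set.inter_subset_right
    (fun s hs a ha => ⟨hL.2 s a ha.1, h.2 s hs a ha.2⟩)
  exact Set.inter_eq_right.mp this

theorem aux_main {S : Type*} [Semigroup S]
    (hsimple : ∀ I : Set S, IsTwoSidedIdealSet I → I = Set.univ)
    (S₁ S₂ : Set S)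
    (h1 : IsSubsemigroupSet S₁) (h2 : IsSubsemigroupSet S₂)
    (hls1 : LeftSimpleIn S₁) (hls2 : LeftSimpleIn S₂)
    (hunion : S₁ ∪ S₂ = Set.univ) (L : Set S) (hL : IsLeftIdeal L) (hne : L ≠ Set.univ)
    {x : S} (hxL : x ∈ L) (hx1 : x ∈ S₁) :
    S₁ ∩ S₂ = ∅ ∧ ∀ L : Set S, IsMinLeftIdeal L ↔ (L = S₁ ∨ L = S₂) := by
  have hmem : ∀ y, y ∈ S₁ ∨ y ∈ S₂ := fun y => by
    have : y ∈ S₁ ∪ S₂ := hunion ▸ Set.mem_univ y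
    exact this
  have hsub := aux_sub h1 hls1 hL hxL hx1
  have hno : ∀ y ∈ L, y ∉ S₂ := by
    intro y hy hy2
    have h' := aux_sub h2 hls2 hL hy hy2
    exact hne (Set.eq_univ_of_forall fun z => (hmem z).elim (fun h => hsub h) (fun h => h' h))
  have hL1 : L = S₁ :=
    Set.Subset.antisymm (fun y hy => (hmem y).resolve_right (hno y hy)) hsub
  subst hL1
  have hdisj : L ∩ S₂ = ∅ := Set.eq_empty_of_forall_notMem fun y hy => hno y hy.1 hy.2
  obtain ⟨b, hb⟩ := h2.1
  have hI := hsimple {z | ∃ a ∈ L, ∃ t, z = a * t} ⟨⟨x * x, x, hxL, x, rfl⟩, by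
    rintro s _ ⟨a, ha, t, rfl⟩
    exact ⟨⟨s * a, hL.2 s a ha, t, (mul_assoc _ _ _).symm⟩, ⟨a, ha, t * s, mul_assoc _ _ _⟩⟩⟩
  have hbI : b ∈ {z | ∃ a ∈ L, ∃ t, z = a * t} := hI ▸ Set.mem_univ b
  obtain ⟨a, ha, t, hat⟩ := hbI
  have hM : IsLeftIdeal {z | ∃ a ∈ L, z = a * t} := ⟨⟨b, a, ha, hat⟩, by
    rintro s _ ⟨a, ha, rfl⟩
    exact ⟨s * a, hL.2 s a ha, (mul_assoc _ _ _).symm⟩⟩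
  have hM2 := aux_sub h2 hls2 hM ⟨a, ha, hat⟩ hb
  have hnoL : ∀ c ∈ L, c * t ∉ L := by
    intro c hc hct
    have hK : IsLeftIdeal {z | z ∈ L ∧ z * t ∈ L} := ⟨⟨c, hc, hct⟩, by
      rintro s z ⟨hz, hzt⟩
      exact ⟨hL.2 s z hz, by rw [mul_assoc]; exact hL.2 s _ hzt⟩⟩
    have := aux_sub h1 hls1 hK (x := c) ⟨hc, hct⟩ hc ha
    exact hno b (hat ▸ this.2) hb
  have hS2 : IsLeftIdeal S₂ := by
    refine ⟨⟨b, hb⟩, fun s z hz => ?_⟩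
    obtain ⟨c, hc, hz'⟩ := hM.2 s z (hM2 hz)
    rw [hz']
    exact (hmem _).resolve_left (hnoL c hc)
  refine ⟨hdisj, fun K => ⟨?_, ?_⟩⟩
  · rintro ⟨hK, hmin⟩
    obtain ⟨k, hk⟩ := hK.1
    rcases hmem k with h | h
    · exact Or.inl (hmin _ hL (aux_sub h1 hls1 hK hk h)).symm
    · exact Or.inr (hmin _ hS2 (aux_sub h2 hls2 hK hk h)).symm
  · rintro (rfl | rfl)
    · refine ⟨hL, fun K hK hs => hs.antisymm ?_⟩
      obtain ⟨k, hk⟩ := hK.1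
      exact aux_sub h1 hls1 hK hk (hs hk)
    · refine ⟨hS2, fun K hK hs => hs.antisymm ?_⟩
      obtain ⟨k, hk⟩ := hK.1
      exact aux_sub h2 hls2 hK hk (hs hk)

/-- A completely simple semigroup (simple with a minimal idempotent) which is
the union of two left simple subsemigroups `S₁`, `S₂` is either itself left simple, or the
union is disjoint and `S₁`, `S₂` are precisely the minimal left ideals. -/
theorem stmt_1 {S : Type*} [Semigroup S]
    (hsimple : ∀ I : Set S, IsTwoSidedIdealSet I → I = Set.univ)
    (hminidem : ∃ p : S, p * p = p ∧
      ∀ q : S, q * q = q → q = q * p → q = p * q → q = p)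
    (S₁ S₂ : Set S)
    (h1 : IsSubsemigroupSet S₁) (h2 : IsSubsemigroupSet S₂)
    (hls1 : LeftSimpleIn S₁) (hls2 : LeftSimpleIn S₂)
    (hunion : S₁ ∪ S₂ = Set.univ) :
    (∀ L : Set S, IsLeftIdeal L → L = Set.univ) ∨
    (S₁ ∩ S₂ = ∅ ∧ ∀ L : Set S, IsMinLeftIdeal L ↔ (L = S₁ ∨ L = S₂)) := by
  by_cases hall : ∀ L : Set S, IsLeftIdeal L → L = Set.univ
  · exact Or.inl hall
  right
  push Not at hall
  obtain ⟨L, hL, hne⟩ := hall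
  obtain ⟨x, hx⟩ := hL.1
  have hx' : x ∈ S₁ ∪ S₂ := hunion ▸ Set.mem_univ x
  rcases hx' with h | h
  · exact aux_main hsimple S₁ S₂ h1 h2 hls1 hls2 hunion L hL hne hx h
  · obtain ⟨hd, hm⟩ := aux_main hsimple S₂ S₁ h2 h1 hls2 hls1
      (by rw [Set.union_comm]; exact hunion) L hL hne hx h
    exact ⟨by rw [Set.inter_comm]; exact hd, fun K => (hm K).trans or_comm⟩
end

section
/- Let X be a compact metric space and M a monoid acting on X by continuous surjective maps, with Ellis semigroup E(X,M). The proximality relation on X is transitive if and only if E(X,M) has exactly one minimal left ideal. -/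
/-- A left ideal of the subsemigroup `S` of self-maps of `X` (under composition):
a nonempty subset `L ⊆ S` with `f ∘ g ∈ L` for all `f ∈ S`, `g ∈ L`. -/
def IsLeftIdealIn {X : Type*} (S L : Set (X → X)) : Prop :=
  L.Nonempty ∧ L ⊆ S ∧ ∀ f ∈ S, ∀ g ∈ L, f ∘ g ∈ L

/-- A minimal left ideal of `S`. -/
def IsMinLeftIdealIn {X : Type*} (S L : Set (X → X)) : Prop :=
  IsLeftIdealIn S L ∧ ∀ L' : Set (X → X), IsLeftIdealIn S L' → L' ⊆ L → L' = L


section helpers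
variable {X : Type*}

theorem orbit_leftIdeal {S L : Set (X → X)} (hS : ∀ f ∈ S, ∀ g ∈ S, f ∘ g ∈ S) (hL : IsLeftIdealIn S L)
    {m : X → X} (hm : m ∈ L) :
    IsLeftIdealIn S ((fun f => f ∘ m) '' S) ∧ (fun f => f ∘ m) '' S ⊆ L := by
  have hmS := hL.2.1 hm
  refine ⟨⟨⟨m ∘ m, m, hmS, rfl⟩, ?_, ?_⟩, ?_⟩
  · rintro _ ⟨f, hf, rfl⟩
    exact hS f hf m hmS
  · rintro f hf _ ⟨g, hg, rfl⟩
    exact ⟨f ∘ g, hS f hf g hg, rfl⟩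
  · rintro _ ⟨f, hf, rfl⟩
    exact hL.2.2 f hf m hm

theorem orbit_eq {S L : Set (X → X)} (hS : ∀ f ∈ S, ∀ g ∈ S, f ∘ g ∈ S) (hL : IsMinLeftIdealIn S L)
    {m : X → X} (hm : m ∈ L) : (fun f => f ∘ m) '' S = L :=
  hL.2 _ (orbit_leftIdeal hS hL.1 hm).1 (orbit_leftIdeal hS hL.1 hm).2

theorem cont_rcomp [TopologicalSpace X] (m : X → X) : Continuous (fun f : X → X => f ∘ m) :=
  continuous_pi fun x => continuous_apply (m x)

theorem exists_min [TopologicalSpace X] [T2Space X] {S L : Set (X → X)}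
    (hS : ∀ f ∈ S, ∀ g ∈ S, f ∘ g ∈ S) (hc : IsCompact S) (hL : IsLeftIdealIn S L) :
    ∃ K ⊆ L, IsMinLeftIdealIn S K := by
  have key : ∀ L : Set (X → X), IsLeftIdealIn S L →
      ∃ K ⊆ L, IsClosed K ∧ IsLeftIdealIn S K := by
    intro L hL
    obtain ⟨m, hm⟩ := hL.1
    exact ⟨_, (orbit_leftIdeal hS hL hm).2, (hc.image (cont_rcomp m)).isClosed,
      (orbit_leftIdeal hS hL hm).1⟩
  obtain ⟨K0, hK0L, hK0⟩ := key L hL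
  obtain ⟨K, hKK, hK⟩ := zorn_superset_nonempty {K : Set (X → X) | IsClosed K ∧ IsLeftIdealIn S K}
    (by
      intro c hcs hch hne
      refine ⟨⋂₀ c, ⟨isClosed_sInter fun K hK => (hcs hK).1, ?_, ?_, ?_⟩,
        fun s hs => Set.sInter_subset_of_mem hs⟩
      · have := hne.to_subtype
        refine IsCompact.nonempty_sInter_of_directed_nonempty_isCompact_isClosed ?_ ?_ ?_ ?_
        · intro A hA B hB
          rcases hch.total hA hB with h | h
          · exact ⟨A, hA, subset_rfl, h⟩
          · exact ⟨B, hB, h, subset_rfl⟩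
        · exact fun K hK => (hcs hK).2.1
        · exact fun K hK => hc.of_isClosed_subset (hcs hK).1 (hcs hK).2.2.1
        · exact fun K hK => (hcs hK).1
      · obtain ⟨K, hK⟩ := hne
        exact (Set.sInter_subset_of_mem hK).trans (hcs hK).2.2.1
      · intro f hf g hg K hK
        exact (hcs hK).2.2.2 f hf g (hg K hK)) K0 hK0
  refine ⟨K, hKK.trans hK0L, hK.prop.2, fun L' hL' hLK => ?_⟩
  obtain ⟨K', hK'L, hK'⟩ := key L' hL'
  exact hLK.antisymm ((hK.le_of_le hK' (hK'L.trans hLK)).trans hK'L)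

theorem ellis_idem [TopologicalSpace X] [T2Space X] {T : Set (X → X)} (hne : T.Nonempty)
    (hc : IsCompact T) (hT : ∀ f ∈ T, ∀ g ∈ T, f ∘ g ∈ T) : ∃ u ∈ T, u ∘ u = u := by
  letI : Semigroup (X → X) := { mul := fun f g => f ∘ g, mul_assoc := fun _ _ _ => rfl }
  exact exists_idempotent_in_compact_subsemigroup (fun r => cont_rcomp r) T hne hc hT

theorem min_pair [TopologicalSpace X] [T2Space X] {S L L' : Set (X → X)}
    (hS : ∀ f ∈ S, ∀ g ∈ S, f ∘ g ∈ S) (hc : IsCompact S)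
    (hL : IsMinLeftIdealIn S L) (hL' : IsMinLeftIdealIn S L') :
    ∃ u ∈ L, ∃ v ∈ L', u ∘ u = u ∧ v ∘ v = v ∧ u ∘ v = v := by
  have hcomp : ∀ L, IsMinLeftIdealIn S L → IsCompact L := by
    intro L hL
    obtain ⟨m, hm⟩ := hL.1.1
    rw [← orbit_eq hS hL hm]
    exact hc.image (cont_rcomp m)
  obtain ⟨u, hu, huu⟩ := ellis_idem hL.1.1 (hcomp L hL)
    (fun f hf g hg => hL.1.2.2 f (hL.1.2.1 hf) g hg)
  have h1 : (fun f => f ∘ u) '' L' = L := by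
    refine hL.2 _ ⟨hL'.1.1.image _, ?_, ?_⟩ ?_
    · rintro _ ⟨f, hf, rfl⟩
      exact hS f (hL'.1.2.1 hf) u (hL.1.2.1 hu)
    · rintro f hf _ ⟨g, hg, rfl⟩
      exact ⟨f ∘ g, hL'.1.2.2 f hf g hg, rfl⟩
    · rintro _ ⟨f, hf, rfl⟩
      exact hL.1.2.2 f (hL'.1.2.1 hf) u hu
  have h2 : u ∈ (fun f => f ∘ u) '' L' := h1 ▸ hu
  obtain ⟨w, hw, hwu⟩ := h2
  obtain ⟨v, ⟨hv, hvu⟩, hvv⟩ := ellis_idem (T := L' ∩ (fun f => f ∘ u) ⁻¹' {u}) ⟨w, hw, hwu⟩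
    ((hcomp L' hL').inter_right (isClosed_singleton.preimage (cont_rcomp u)))
    (by
      rintro f ⟨hf, hfu⟩ g ⟨hg, hgu⟩
      refine ⟨hL'.1.2.2 f (hL'.1.2.1 hf) g hg, ?_⟩
      change f ∘ u = u at hfu
      change g ∘ u = u at hgu
      change f ∘ (g ∘ u) = u
      rw [hgu, hfu])
  change v ∘ u = u at hvu
  refine ⟨u, hu, v, hv, huu, hvv, ?_⟩
  have huv : u ∘ v ∈ L' := hL'.1.2.2 u (hL.1.2.1 hu) v hv
  have h3 : v ∈ (fun f => f ∘ (u ∘ v)) '' S := (orbit_eq hS hL' huv).symm ▸ hv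
  obtain ⟨g, hg, hgv⟩ := h3
  change g ∘ (u ∘ v) = v at hgv
  have h4 : (u ∘ v) ∘ (u ∘ v) = u ∘ v := by
    change u ∘ ((v ∘ u) ∘ v) = _
    rw [hvu]
    change (u ∘ u) ∘ v = _
    rw [huu]
  have h5 : v ∘ (u ∘ v) = v := by
    calc v ∘ (u ∘ v) = (g ∘ (u ∘ v)) ∘ (u ∘ v) := by rw [hgv]
      _ = g ∘ ((u ∘ v) ∘ (u ∘ v)) := rfl
      _ = v := by rw [h4, hgv]
  have h6 : v ∘ (u ∘ v) = u ∘ v := by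
    change (v ∘ u) ∘ v = _
    rw [hvu]
  rw [← h6, h5]

end helpers

/-- The proximality relation of a monoid action on a compact metric space by
continuous surjections is transitive iff the Ellis semigroup has exactly one minimal
left ideal. -/
theorem stmt_4 {X M : Type*} [MetricSpace X] [CompactSpace X] [Monoid M]
    (α : M → X → X)
    (hone : α 1 = id)
    (hmul : ∀ s t : M, α (s * t) = α s ∘ α t)
    (hcont : ∀ t : M, Continuous (α t))
    (hsurj : ∀ t : M, Function.Surjective (α t)) :
    (∀ x y z : X,
        (∀ ε > 0, ∃ t : M, dist (α t x) (α t y) < ε) →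
        (∀ ε > 0, ∃ t : M, dist (α t y) (α t z) < ε) →
        (∀ ε > 0, ∃ t : M, dist (α t x) (α t z) < ε)) ↔
      (∃! L : Set (X → X), IsMinLeftIdealIn (closure (Set.range α)) L) := by
  have hSc : IsCompact (closure (Set.range α)) := isClosed_closure.isCompact
  have hS : ∀ f ∈ closure (Set.range α), ∀ g ∈ closure (Set.range α),
      f ∘ g ∈ closure (Set.range α) := by
    have h1 : ∀ t, ∀ g ∈ closure (Set.range α), α t ∘ g ∈ closure (Set.range α) := by
      intro t g hg
      have hc : Continuous (fun g : X → X => α t ∘ g) :=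
        continuous_pi fun x => (hcont t).comp (continuous_apply x)
      refine map_mem_closure hc hg ?_
      rintro _ ⟨s, rfl⟩
      exact ⟨t * s, hmul t s⟩
    intro f hf g hg
    rw [← closure_closure]
    refine map_mem_closure (f := fun f : X → X => f ∘ g) (cont_rcomp g) hf ?_
    rintro _ ⟨s, rfl⟩
    exact h1 s g hg
  have hprox : ∀ x y : X, (∀ ε > 0, ∃ t : M, dist (α t x) (α t y) < ε) ↔
      ∃ f ∈ closure (Set.range α), f x = f y := by
    intro x y
    have hd : Continuous (fun f : X → X => dist (f x) (f y)) :=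
      (continuous_apply x).dist (continuous_apply y)
    constructor
    · intro h
      obtain ⟨f, hf, hmin⟩ := hSc.exists_isMinOn ⟨α 1, subset_closure ⟨1, rfl⟩⟩ hd.continuousOn
      refine ⟨f, hf, ?_⟩
      by_contra hne
      obtain ⟨t, ht⟩ := h _ (dist_pos.2 hne)
      exact absurd (hmin (subset_closure (Set.mem_range_self t))) (not_le.2 ht)
    · rintro ⟨f, hf, hxy⟩ ε hε
      obtain ⟨_, hg, t, rfl⟩ := mem_closure_iff.1 hf _ (isOpen_lt hd continuous_const)
        (show dist (f x) (f y) < ε by simpa [hxy] using hε)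
      exact ⟨t, hg⟩
  simp only [hprox]
  have hne : (closure (Set.range α)).Nonempty := ⟨α 1, subset_closure ⟨1, rfl⟩⟩
  generalize closure (Set.range α) = S at *
  have hSne : ∃ L, IsMinLeftIdealIn S L := by
    obtain ⟨K, -, hK⟩ := exists_min (L := S) hS hSc ⟨hne, subset_rfl, hS⟩
    exact ⟨K, hK⟩
  constructor
  · intro htr
    obtain ⟨L, hL⟩ := hSne
    refine ⟨L, hL, fun L' hL' => ?_⟩
    obtain ⟨u, hu, v, hv, huu, hvv, huv⟩ := min_pair hS hSc hL hL'
    have huS := hL.1.2.1 hu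
    have hvS := hL'.1.2.1 hv
    have heq : u = v := by
      funext x
      obtain ⟨f, hf, hfx⟩ := htr (u x) x (v x) ⟨u, huS, congrFun huu x⟩
        ⟨v, hvS, (congrFun hvv x).symm⟩
      have h1 : f ∘ u ∈ L := hL.1.2.2 f hf u hu
      have h2 : u ∈ (fun g => g ∘ (f ∘ u)) '' S := (orbit_eq hS hL h1).symm ▸ hu
      obtain ⟨g, hg, hgu⟩ := h2
      have h3 : ∀ y, g (f (u y)) = u y := fun y => congrFun hgu y
      have h4 : ∀ y, u (v y) = v y := fun y => congrFun huv y
      calc u x = g (f (u x)) := (h3 x).symm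
        _ = g (f (u (v x))) := by rw [hfx, h4]
        _ = v x := by rw [h3, h4]
    subst heq
    rw [← orbit_eq hS hL hu, ← orbit_eq hS hL' hv]
  · rintro ⟨L, hL, huniq⟩ x y z ⟨f, hf, hfxy⟩ ⟨g, hg, hgyz⟩
    have key : ∀ a b : X, (∃ f ∈ S, f a = f b) → ∀ f ∈ L, f a = f b := by
      rintro a b ⟨f, hf, hab⟩
      obtain ⟨K, hK, hKm⟩ := exists_min (L := {h | h ∈ S ∧ h a = h b}) hS hSc
        ⟨⟨f, hf, hab⟩, fun h hh => hh.1,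
          fun p hp q hq => ⟨hS p hp q hq.1, congrArg p hq.2⟩⟩
      rw [← huniq K hKm]
      exact fun h hh => (hK hh).2
    obtain ⟨h, hh⟩ := hL.1.1
    exact ⟨h, hL.1.2.1 hh, (key x y ⟨f, hf, hfxy⟩ h hh).trans (key y z ⟨g, hg, hgyz⟩ h hh)⟩
end

section
/- Let X be a compact metric space and M a monoid acting on X by continuous surjective maps, with Ellis semigroup E(X,M). The system is distal (x and y proximal implies x = y) if and only if E(X,M) is a group, i.e., every f ∈ E(X,M) has some g ∈ E(X,M) with f ∘ g = g ∘ f = id. -/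
/-- A monoid action on a compact metric space by continuous surjections is
distal (proximal pairs are equal) iff its Ellis semigroup is a group, i.e. every element
has a two-sided compositional inverse in the Ellis semigroup. -/
theorem stmt_5 {X M : Type*} [MetricSpace X] [CompactSpace X] [Monoid M]
    (α : M → X → X)
    (hone : α 1 = id)
    (hmul : ∀ s t : M, α (s * t) = α s ∘ α t)
    (hcont : ∀ t : M, Continuous (α t))
    (hsurj : ∀ t : M, Function.Surjective (α t)) :
    (∀ x y : X, (∀ ε > 0, ∃ t : M, dist (α t x) (α t y) < ε) → x = y) ↔
      (∀ f ∈ closure (Set.range α), ∃ g ∈ closure (Set.range α),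
        f ∘ g = id ∧ g ∘ f = id) := by
  have hright : ∀ g : X → X, Continuous (fun f : X → X => f ∘ g) := fun g =>
    continuous_pi fun x => continuous_apply (g x)
  have hleft : ∀ t, Continuous (fun f : X → X => α t ∘ f) := fun t =>
    continuous_pi fun x => (hcont t).comp (continuous_apply x)
  have h1 : ∀ t, ∀ g ∈ closure (Set.range α), α t ∘ g ∈ closure (Set.range α) := by
    intro t g hg
    refine map_mem_closure (hleft t) hg ?_
    rintro _ ⟨s, rfl⟩
    exact ⟨t * s, hmul t s⟩
  have h2 : ∀ f ∈ closure (Set.range α), ∀ g ∈ closure (Set.range α),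
      f ∘ g ∈ closure (Set.range α) := by
    intro f hf g hg
    have := map_mem_closure (t := closure (Set.range α)) (hright g) hf (by
      rintro _ ⟨s, rfl⟩
      exact h1 s g hg)
    rwa [closure_closure] at this
  have hcomp : IsCompact (closure (Set.range α)) := isClosed_closure.isCompact
  have hid : id ∈ closure (Set.range α) := subset_closure ⟨1, hone⟩
  have hdc : ∀ x y : X, Continuous (fun f : X → X => dist (f x) (f y)) := fun x y =>
    (continuous_apply x).dist (continuous_apply y)
  constructor
  · intro hd
    have hl : ∀ f ∈ closure (Set.range α), ∃ g ∈ closure (Set.range α), g ∘ f = id := by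
      intro f hf
      letI : Semigroup (X → X) := { mul := fun a b => a ∘ b, mul_assoc := fun _ _ _ => rfl }
      obtain ⟨u, ⟨g, hg, rfl⟩, hu⟩ := exists_idempotent_in_compact_subsemigroup
        (M := X → X) hright ((fun g : X → X => g ∘ f) '' closure (Set.range α))
        ⟨_, id, hid, rfl⟩ (hcomp.image (hright f)) (by
          rintro _ ⟨a, ha, rfl⟩ _ ⟨b, hb, rfl⟩
          exact ⟨(a ∘ f) ∘ b, h2 _ (h2 _ ha _ hf) _ hb, rfl⟩)
      refine ⟨g, hg, ?_⟩
      have hu' : (g ∘ f) ∘ (g ∘ f) = g ∘ f := hu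
      have hE := h2 g hg f hf
      generalize g ∘ f = u at hu' hE
      funext x
      refine (hd _ _ fun ε hε => ?_)
      have hx : u (u x) = u x := congrFun hu' x
      obtain ⟨_, hv, ⟨t, rfl⟩⟩ := mem_closure_iff.1 hE {v | dist (v (u x)) (v x) < ε}
        (isOpen_lt (hdc _ _) continuous_const) (by simpa [hx] using hε)
      exact ⟨t, hv⟩
    intro f hf
    obtain ⟨g, hg, hgf⟩ := hl f hf
    obtain ⟨h, hh, hhg⟩ := hl g hg
    have : h = f := by
      calc h = h ∘ (g ∘ f) := by rw [hgf]; rfl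
        _ = (h ∘ g) ∘ f := rfl
        _ = f := by rw [hhg]; rfl
    subst this
    exact ⟨g, hg, hhg, hgf⟩
  · intro hG x y hxy
    obtain ⟨f, hf, hmin⟩ := hcomp.exists_isMinOn ⟨_, hid⟩ (hdc x y).continuousOn
    have h0 : f x = f y := by
      by_contra hne
      obtain ⟨t, ht⟩ := hxy _ (dist_pos.2 hne)
      have : dist (f x) (f y) ≤ dist (α t x) (α t y) := hmin (subset_closure ⟨t, rfl⟩)
      linarith
    obtain ⟨g, -, -, hgf⟩ := hG f hf
    have := congrArg g h0
    have e := fun z => congrFun hgf z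
    simp only [Function.comp, id] at e
    rwa [e, e] at this
end

section
/- Let X be a compact metric space and α : X → X a homeomorphism. Let E be the closure of {α^n : n ∈ ℤ} and E⁺ the closure of {α^n : n ≥ 0} in the space of self-maps of X with the product topology. If f ∈ E and g ∈ E⁺ is not of the form α^m for any m ≥ 0, then f ∘ g ∈ E⁺. -/
/-- The `n`-th power (`n : ℤ`) of a homeomorphism `α`, as a self-map. -/
def zIter {X : Type*} [TopologicalSpace X] (α : X ≃ₜ X) (n : ℤ) : X → X :=
  if 0 ≤ n then (⇑α)^[n.toNat] else (⇑α.symm)^[(-n).toNat]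

/-- For a homeomorphism `α` of a compact metric space, if `f` belongs to the
Ellis semigroup `E` of the `ℤ`-action and `g` belongs to `E⁺` (closure of nonnegative
powers) but is not itself a nonnegative power of `α`, then `f ∘ g ∈ E⁺`. -/
theorem stmt_6 {X : Type*} [MetricSpace X] [CompactSpace X] (α : X ≃ₜ X)
    (f g : X → X)
    (hf : f ∈ closure {h : X → X | ∃ n : ℤ, h = zIter α n})
    (hg : g ∈ closure {h : X → X | ∃ n : ℕ, h = (⇑α)^[n]})
    (hgnot : ¬∃ n : ℕ, g = (⇑α)^[n]) :
    f ∘ g ∈ closure {h : X → X | ∃ n : ℕ, h = (⇑α)^[n]} := by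
  set P : Set (X → X) := {h : X → X | ∃ n : ℕ, h = (⇑α)^[n]} with hP
  have tail : ∀ k : ℕ, g ∈ closure {h : X → X | ∃ n : ℕ, h = (⇑α)^[n + k]} := by
    intro k
    have hsub : P ⊆ {h : X → X | ∃ n : ℕ, h = (⇑α)^[n + k]} ∪
        ((fun n : ℕ => (⇑α)^[n]) '' Set.Iio k) := by
      rintro h ⟨n, rfl⟩
      by_cases hn : n < k
      · exact Or.inr ⟨n, hn, rfl⟩
      · exact Or.inl ⟨n - k, by rw [Nat.sub_add_cancel (not_lt.mp hn)]⟩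
    have hg2 := closure_mono hsub hg
    rw [closure_union] at hg2
    rcases hg2 with h | h
    · exact h
    · rw [((Set.finite_Iio k).image _).isClosed.closure_eq] at h
      obtain ⟨n, -, hn⟩ := h
      exact absurd ⟨n, hn.symm⟩ hgnot
  have key : ∀ n : ℤ, zIter α n ∘ g ∈ closure P := by
    intro n
    unfold zIter
    split_ifs with hn
    · have hc : Continuous (fun h : X → X => (⇑α)^[n.toNat] ∘ h) :=
        continuous_pi fun x => (α.continuous.iterate _).comp (continuous_apply x)
      refine map_mem_closure hc hg ?_
      rintro h ⟨m, rfl⟩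
      exact ⟨n.toNat + m, (Function.iterate_add _ _ _).symm⟩
    · have hc : Continuous (fun h : X → X => (⇑α.symm)^[(-n).toNat] ∘ h) :=
        continuous_pi fun x => (α.symm.continuous.iterate _).comp (continuous_apply x)
      refine map_mem_closure hc (tail (-n).toNat) ?_
      rintro h ⟨m, rfl⟩
      refine ⟨m, ?_⟩
      funext x
      have hl : Function.LeftInverse (⇑α.symm) (⇑α) := α.symm_apply_apply
      rw [Nat.add_comm, Function.iterate_add]
      exact hl.iterate _ _
  have hc : Continuous (fun h : X → X => h ∘ g) :=
    continuous_pi fun x => continuous_apply (g x)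
  have := map_mem_closure (t := closure P) hc hf (by rintro h ⟨n, rfl⟩; exact key n)
  rwa [closure_closure] at this
end

section
/- Let X be a compact metric space and α : X → X a homeomorphism, with E the closure of {α^n : n ∈ ℤ} and E⁺ the closure of {α^n : n ≥ 0} in the space of self-maps of X with the product topology. Then every minimal left ideal of E⁺ is a minimal left ideal of E. In particular, if E⁺ is a group (every f ∈ E⁺ has g ∈ E⁺ with f ∘ g = g ∘ f = id), then E = E⁺. -/
section Helpers

variable {X : Type*} [MetricSpace X] [CompactSpace X] (α : X ≃ₜ X)

lemma precomp_cont (g : X → X) : Continuous (fun f : X → X => f ∘ g) :=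
  continuous_pi fun x => continuous_apply (g x)

lemma postcomp_cont (f : X → X) (hf : Continuous f) : Continuous (fun g : X → X => f ∘ g) :=
  continuous_pi fun x => hf.comp (continuous_apply x)

lemma ep_comp {f g : X → X} (hf : f ∈ closure {h : X → X | ∃ n : ℕ, h = (⇑α)^[n]})
    (hg : g ∈ closure {h : X → X | ∃ n : ℕ, h = (⇑α)^[n]}) :
    f ∘ g ∈ closure {h : X → X | ∃ n : ℕ, h = (⇑α)^[n]} := by
  have h1 : ∀ n : ℕ, (⇑α)^[n] ∘ g ∈ closure {h : X → X | ∃ n : ℕ, h = (⇑α)^[n]} := by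
    intro n
    refine map_mem_closure (postcomp_cont _ (α.continuous.iterate n)) hg ?_
    rintro _ ⟨m, rfl⟩
    exact ⟨n + m, (Function.iterate_add _ _ _).symm⟩
  have h2 : closure {h : X → X | ∃ n : ℕ, h = (⇑α)^[n]} ⊆
      (fun f : X → X => f ∘ g) ⁻¹' closure {h : X → X | ∃ n : ℕ, h = (⇑α)^[n]} := by
    apply closure_minimal
    · rintro _ ⟨n, rfl⟩
      exact h1 n
    · exact isClosed_closure.preimage (precomp_cont g)
  exact h2 hf

lemma ep_comm {f : X → X} (hf : f ∈ closure {h : X → X | ∃ n : ℕ, h = (⇑α)^[n]}) :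
    f ∘ α = α ∘ f := by
  have h2 : closure {h : X → X | ∃ n : ℕ, h = (⇑α)^[n]} ⊆ {f | f ∘ α = α ∘ f} := by
    apply closure_minimal
    · rintro _ ⟨n, rfl⟩
      exact (Function.iterate_succ _ _).symm.trans (Function.iterate_succ' _ _)
    · exact isClosed_eq (precomp_cont _) (postcomp_cont _ α.continuous)
  exact h2 hf

lemma ep_sub_e : closure {h : X → X | ∃ n : ℕ, h = (⇑α)^[n]} ⊆
    closure {h : X → X | ∃ n : ℤ, h = zIter α n} := by
  apply closure_mono
  rintro _ ⟨n, rfl⟩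
  exact ⟨n, by simp [zIter]⟩

lemma part_one (L : Set (X → X))
    (hL : IsMinLeftIdealIn (closure {h : X → X | ∃ n : ℕ, h = (⇑α)^[n]}) L) :
    IsMinLeftIdealIn (closure {h : X → X | ∃ n : ℤ, h = zIter α n}) L := by
  obtain ⟨⟨hne, hsub, hmul⟩, hmin⟩ := hL
  have hid : id ∈ closure {h : X → X | ∃ n : ℕ, h = (⇑α)^[n]} := subset_closure ⟨0, rfl⟩
  have ha : ⇑α ∈ closure {h : X → X | ∃ n : ℕ, h = (⇑α)^[n]} := subset_closure ⟨1, rfl⟩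
  have hclosed : IsClosed L := by
    obtain ⟨g, hg⟩ := hne
    have : (fun f : X → X => f ∘ g) '' closure {h : X → X | ∃ n : ℕ, h = (⇑α)^[n]} = L := by
      apply hmin
      · refine ⟨⟨_, id, hid, rfl⟩, ?_, ?_⟩
        · rintro _ ⟨f, hf, rfl⟩
          exact hsub (hmul f hf g hg)
        · rintro f hf _ ⟨k, hk, rfl⟩
          exact ⟨f ∘ k, ep_comp α hf hk, rfl⟩
      · rintro _ ⟨f, hf, rfl⟩
        exact hmul f hf g hg
    rw [← this]
    exact (isClosed_closure.isCompact.image (precomp_cont g)).isClosed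
  have haL : (fun f : X → X => α ∘ f) '' L = L := by
    apply hmin
    · refine ⟨hne.image _, ?_, ?_⟩
      · rintro _ ⟨f, hf, rfl⟩
        exact hsub (hmul _ ha f hf)
      · rintro f hf _ ⟨k, hk, rfl⟩
        refine ⟨f ∘ k, hmul f hf k hk, ?_⟩
        change (α ∘ f) ∘ k = (f ∘ α) ∘ k
        rw [ep_comm α hf]
    · rintro _ ⟨f, hf, rfl⟩
      exact hmul _ ha f hf
  have hsymm : ∀ g ∈ L, ⇑α.symm ∘ g ∈ L := by
    intro g hg
    rw [← haL] at hg
    obtain ⟨k, hk, rfl⟩ := hg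
    have : ⇑α.symm ∘ (⇑α ∘ k) = k := by
      funext x
      simp
    simpa only [this] using hk
  have hsn : ∀ n : ℕ, ∀ g ∈ L, (⇑α.symm)^[n] ∘ g ∈ L := by
    intro n
    induction n with
    | zero => intro g hg; exact hg
    | succ n ih =>
      intro g hg
      rw [Function.iterate_succ]
      exact ih _ (hsymm g hg)
  refine ⟨⟨hne, hsub.trans (ep_sub_e α), ?_⟩, ?_⟩
  · intro f hf g hg
    have h2 : closure {h : X → X | ∃ n : ℤ, h = zIter α n} ⊆
        (fun f : X → X => f ∘ g) ⁻¹' L := by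
      apply closure_minimal
      · rintro _ ⟨n, rfl⟩
        change zIter α n ∘ g ∈ L
        unfold zIter
        split_ifs
        · exact hmul _ (subset_closure ⟨_, rfl⟩) g hg
        · exact hsn _ g hg
      · exact hclosed.preimage (precomp_cont g)
    exact h2 hf
  · rintro L' ⟨h1, _, h3⟩ hL'
    exact hmin L' ⟨h1, hL'.trans hsub, fun f hf => h3 f (ep_sub_e α hf)⟩ hL'

end Helpers

/-- For a homeomorphism `α` of a compact metric space, every minimal left ideal
of `E⁺` is a minimal left ideal of `E`; in particular, if `E⁺` is a group then `E = E⁺`. -/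
theorem stmt_7 {X : Type*} [MetricSpace X] [CompactSpace X] (α : X ≃ₜ X) :
    (∀ L : Set (X → X),
      IsMinLeftIdealIn (closure {h : X → X | ∃ n : ℕ, h = (⇑α)^[n]}) L →
      IsMinLeftIdealIn (closure {h : X → X | ∃ n : ℤ, h = zIter α n}) L) ∧
    ((∀ f ∈ closure {h : X → X | ∃ n : ℕ, h = (⇑α)^[n]},
        ∃ g ∈ closure {h : X → X | ∃ n : ℕ, h = (⇑α)^[n]},
          f ∘ g = id ∧ g ∘ f = id) →
      closure {h : X → X | ∃ n : ℤ, h = zIter α n} =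
        closure {h : X → X | ∃ n : ℕ, h = (⇑α)^[n]}) := by
  refine ⟨part_one α, fun hgrp => Set.Subset.antisymm ?_ (ep_sub_e α)⟩
  have hid : id ∈ closure {h : X → X | ∃ n : ℕ, h = (⇑α)^[n]} := subset_closure ⟨0, rfl⟩
  have h := part_one α (closure {h : X → X | ∃ n : ℕ, h = (⇑α)^[n]}) (by
    refine ⟨⟨⟨id, hid⟩, subset_rfl, fun f hf g hg => ep_comp α hf hg⟩, ?_⟩
    rintro L' ⟨⟨f, hf⟩, h2, h3⟩ hL'
    refine hL'.antisymm fun k hk => ?_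
    obtain ⟨g, hg, _, hgf⟩ := hgrp f (hL' hf)
    have := h3 k hk _ (h3 g hg f hf)
    rw [hgf] at this
    exact this)
  intro f hf
  exact h.1.2.2 f hf id hid
end

section
/- Let X be a compact metric space with metric d and α : X → X a homeomorphism. The following are equivalent: (i) every forward proximal pair consists of equal points; (ii) every proximal pair consists of equal points; (iii) every backward proximal pair consists of equal points. That is, the forward system (X,α,ℤ⁺) is distal iff (X,α,ℤ) is distal iff the backward system (X,α,ℤ⁻) is distal. -/
theorem aux_ret {X : Type*} [MetricSpace X] [CompactSpace X] (f : X → X) (hf : Continuous f)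
    (h : ∀ x y : X, (∀ ε > 0, ∃ n : ℕ, dist (f^[n] x) (f^[n] y) < ε) → x = y)
    (n : ℕ) (a b : X) (ε : ℝ) (hab : dist a b < ε) :
    ∃ m : ℕ, n ≤ m ∧ dist (f^[m] a) (f^[m] b) < ε := by
  let S : Set (X → X) := {g | ∃ m : ℕ, n ≤ m ∧ g = f^[m]}
  letI sg : Semigroup (X → X) :=
    { mul := fun p q => p ∘ q
      mul_assoc := fun _ _ _ => rfl }
  have hmul : ∀ p q : X → X, @HMul.hMul _ _ _ (@instHMul _ sg.toMul) p q = p ∘ q :=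
    fun _ _ => rfl
  have hcl : ∀ p ∈ closure S, ∀ q ∈ closure S, p ∘ q ∈ closure S := by
    intro p hp q hq
    have h1 : ∀ g ∈ S, g ∘ q ∈ closure S := by
      rintro g ⟨m, hm, rfl⟩
      have hc : Continuous (fun r : X → X => f^[m] ∘ r) :=
        continuous_pi fun x => (hf.iterate m).comp (continuous_apply x)
      refine map_mem_closure hc hq ?_
      rintro r ⟨k, hk, rfl⟩
      exact ⟨m + k, by omega, (Function.iterate_add f m k).symm⟩
    have hc : Continuous (fun r : X → X => r ∘ q) :=
      continuous_pi fun x => continuous_apply (q x)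
    have := map_mem_closure hc hp h1
    rwa [closure_closure] at this
  obtain ⟨u, huS, hu⟩ := @exists_idempotent_in_compact_subsemigroup (X → X) sg _ _
    (fun r => continuous_pi fun x => continuous_apply (r x)) (closure S)
    ⟨f^[n], subset_closure ⟨n, le_rfl, rfl⟩⟩ isClosed_closure.isCompact hcl
  have hu' : ∀ x, u (u x) = u x := fun x => congrFun hu x
  have hid : ∀ x, x = u x := by
    intro x
    apply h
    intro δ hδ
    have ho : IsOpen {g : X → X | dist (g x) (g (u x)) < δ} :=
      isOpen_lt ((continuous_apply x).dist (continuous_apply (u x))) continuous_const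
    obtain ⟨g, hg, m, -, rfl⟩ := mem_closure_iff.1 huS _ ho
      (by simp only [Set.mem_setOf_eq, hu', dist_self]; exact hδ)
    exact ⟨m, hg⟩
  have ho : IsOpen {g : X → X | dist (g a) (g b) < ε} :=
    isOpen_lt ((continuous_apply a).dist (continuous_apply b)) continuous_const
  obtain ⟨g, hg, m, hm, rfl⟩ := mem_closure_iff.1 huS _ ho
    (by simp only [Set.mem_setOf_eq, ← hid]; exact hab)
  exact ⟨m, hm, hg⟩

theorem aux_fwd {X : Type*} [MetricSpace X] [CompactSpace X] (α : X ≃ₜ X)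
    (h : ∀ x y : X, (∀ ε > 0, ∃ n : ℕ, dist ((⇑α)^[n] x) ((⇑α)^[n] y) < ε) → x = y)
    (x y : X) (hxy : ∀ ε > 0, ∃ n : ℕ, dist ((⇑α)^[n] x) ((⇑α)^[n] y) < ε ∨
      dist ((⇑α.symm)^[n] x) ((⇑α.symm)^[n] y) < ε) : x = y := by
  apply h
  intro ε hε
  obtain ⟨n, hn | hn⟩ := hxy ε hε
  · exact ⟨n, hn⟩
  · obtain ⟨m, hm, hd⟩ := aux_ret α α.continuous h n _ _ ε hn
    obtain ⟨k, rfl⟩ := Nat.exists_eq_add_of_le' hm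
    have hi : Function.LeftInverse (⇑α)^[n] (⇑α.symm)^[n] :=
      Function.LeftInverse.iterate α.apply_symm_apply n
    rw [Function.iterate_add_apply, Function.iterate_add_apply, hi, hi] at hd
    exact ⟨k, hd⟩

theorem aux_z {X : Type*} [MetricSpace X] (α : X ≃ₜ X) (x y : X) (ε : ℝ) :
    (∃ n : ℤ, dist (zIter α n x) (zIter α n y) < ε) ↔
    ∃ n : ℕ, dist ((⇑α)^[n] x) ((⇑α)^[n] y) < ε ∨
      dist ((⇑α.symm)^[n] x) ((⇑α.symm)^[n] y) < ε := by
  constructor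
  · rintro ⟨n, hn⟩
    unfold zIter at hn
    split_ifs at hn
    · exact ⟨_, Or.inl hn⟩
    · exact ⟨_, Or.inr hn⟩
  · rintro ⟨n, hn | hn⟩
    · exact ⟨n, by simpa [zIter] using hn⟩
    · rcases Nat.eq_zero_or_pos n with rfl | hp
      · exact ⟨0, by simpa [zIter] using hn⟩
      · refine ⟨-n, ?_⟩
        have : ¬ (0 : ℤ) ≤ -n := by omega
        simpa only [zIter, if_neg this, neg_neg, Int.toNat_natCast] using hn

/-- For a homeomorphism `α` of a compact metric space, forward distality,
distality and backward distality of the associated `ℤ`-action are all equivalent. -/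
theorem stmt_8 {X : Type*} [MetricSpace X] [CompactSpace X] (α : X ≃ₜ X) :
    ((∀ x y : X,
        (∀ ε > 0, ∃ n : ℕ, dist ((⇑α)^[n] x) ((⇑α)^[n] y) < ε) → x = y) ↔
      (∀ x y : X,
        (∀ ε > 0, ∃ n : ℤ, dist (zIter α n x) (zIter α n y) < ε) → x = y)) ∧
    ((∀ x y : X,
        (∀ ε > 0, ∃ n : ℤ, dist (zIter α n x) (zIter α n y) < ε) → x = y) ↔
      (∀ x y : X,
        (∀ ε > 0, ∃ n : ℕ, dist ((⇑α.symm)^[n] x) ((⇑α.symm)^[n] y) < ε) → x = y)) := by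
  simp only [aux_z]
  refine ⟨⟨fun h => aux_fwd α h, fun h x y hxy => h x y fun ε hε => ?_⟩,
    ⟨fun h x y hxy => h x y fun ε hε => ?_, fun h x y hxy => aux_fwd α.symm h x y fun ε hε => ?_⟩⟩
  · obtain ⟨n, hn⟩ := hxy ε hε
    exact ⟨n, Or.inl hn⟩
  · obtain ⟨n, hn⟩ := hxy ε hε
    exact ⟨n, Or.inr hn⟩
  · obtain ⟨n, hn⟩ := hxy ε hε
    exact ⟨n, hn.symm⟩
end

section
/- Let X be a compact metric space and α : X → X a homeomorphism, with E, E⁺, E⁻ the closures of {α^n : n ∈ ℤ}, {α^n : n ≥ 0}, {α^n : n ≤ 0} respectively in the space of self-maps of X with the product topology. Then the kernels (smallest two-sided ideals) M of E, M⁺ of E⁺ and M⁻ of E⁻ exist, M = M⁺ ∪ M⁻, and both M⁺ and M⁻ are left ideals of E. -/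
/-- A two-sided ideal of the subsemigroup `S` of self-maps of `X`. -/
def IsIdealIn {X : Type*} (S I : Set (X → X)) : Prop :=
  I.Nonempty ∧ I ⊆ S ∧ ∀ f ∈ S, ∀ g ∈ I, f ∘ g ∈ I ∧ g ∘ f ∈ I

/-- The kernel of `S`: the smallest two-sided ideal of `S`. -/
def IsKernelOf {X : Type*} (S K : Set (X → X)) : Prop :=
  IsIdealIn S K ∧ ∀ I : Set (X → X), IsIdealIn S I → K ⊆ I

open Set

def MinL {X : Type*} (S L : Set (X → X)) : Prop :=
  IsLeftIdealIn S L ∧ ∀ L', IsLeftIdealIn S L' → L' ⊆ L → L ⊆ L'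

def SemiG {X : Type*} (S : Set (X → X)) : Prop := ∀ f ∈ S, ∀ g ∈ S, f ∘ g ∈ S

def KK {X : Type*} (S : Set (X → X)) : Set (X → X) := {f | ∃ L, MinL S L ∧ f ∈ L}

def PP {X : Type*} [TopologicalSpace X] (β : X ≃ₜ X) : Set (X → X) :=
  closure {h : X → X | ∃ n : ℕ, h = (⇑β)^[n]}

theorem cont_right {X : Type*} [TopologicalSpace X] (g : X → X) :
    Continuous (fun f : X → X => f ∘ g) :=
  continuous_pi fun x => continuous_apply (g x)

theorem cont_left {X : Type*} [TopologicalSpace X] (f : X → X) (hf : Continuous f) :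
    Continuous (fun g : X → X => f ∘ g) :=
  continuous_pi fun x => hf.comp (continuous_apply x)

theorem semi_closure {X : Type*} [TopologicalSpace X] (A : Set (X → X))
    (hc : ∀ f ∈ A, Continuous f) (hA : SemiG A) : SemiG (closure A) := by
  have h1 : ∀ f ∈ A, ∀ g ∈ closure A, f ∘ g ∈ closure A := fun f hf g hg =>
    map_mem_closure (cont_left f (hc f hf)) hg (fun g hg => hA f hf g hg)
  intro f hf g hg
  have := map_mem_closure (t := closure A) (cont_right g) hf (fun f hf => h1 f hf g hg)
  simpa using this

theorem principal {X : Type*} {S : Set (X → X)} (hS : SemiG S) {L : Set (X → X)}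
    (hL : IsLeftIdealIn S L) {g : X → X} (hg : g ∈ L) :
    IsLeftIdealIn S ((fun f => f ∘ g) '' S) ∧ ((fun f => f ∘ g) '' S) ⊆ L := by
  have hgS := hL.2.1 hg
  refine ⟨⟨⟨_, mem_image_of_mem _ hgS⟩, ?_, ?_⟩, ?_⟩
  · rintro _ ⟨f, hf, rfl⟩; exact hS f hf g hgS
  · rintro f hf _ ⟨k, hk, rfl⟩; exact ⟨f ∘ k, hS f hf k hk, rfl⟩
  · rintro _ ⟨f, hf, rfl⟩; exact hL.2.2 f hf g hg

theorem principal_closed {X : Type*} [TopologicalSpace X] [CompactSpace X] [T2Space X]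
    {S : Set (X → X)} (hc : IsClosed S) (g : X → X) : IsClosed ((fun f => f ∘ g) '' S) :=
  (hc.isCompact.image (cont_right g)).isClosed

theorem min_closed {X : Type*} [TopologicalSpace X] [CompactSpace X] [T2Space X]
    {S L : Set (X → X)} (hc : IsClosed S) (hS : SemiG S) (h : MinL S L) : IsClosed L := by
  obtain ⟨g, hg⟩ := h.1.1
  have := principal hS h.1 hg
  rw [(h.2 _ this.1 this.2).antisymm this.2]
  exact principal_closed hc g

theorem exists_min_s9 {X : Type*} [TopologicalSpace X] [CompactSpace X] [T2Space X]
    {S L₀ : Set (X → X)} (hc : IsClosed S) (hS : SemiG S) (h₀ : IsLeftIdealIn S L₀) :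
    ∃ L, MinL S L ∧ L ⊆ L₀ := by
  obtain ⟨g, hg⟩ := h₀.1
  have hp := principal hS h₀ hg
  obtain ⟨L, hLs, hL⟩ := zorn_superset_nonempty {L | IsLeftIdealIn S L ∧ IsClosed L} (by
    intro c hcs hch hne
    refine ⟨⋂₀ c, ⟨⟨?_, ?_, ?_⟩, ?_⟩, fun s hs => sInter_subset_of_mem hs⟩
    · have : Nonempty c := hne.to_subtype
      rw [sInter_eq_iInter]
      apply IsCompact.nonempty_iInter_of_directed_nonempty_isCompact_isClosed
      · intro a b
        rcases hch.total a.2 b.2 with h | h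
        · exact ⟨a, subset_rfl, h⟩
        · exact ⟨b, h, subset_rfl⟩
      · exact fun i => (hcs i.2).1.1
      · exact fun i => (hcs i.2).2.isCompact
      · exact fun i => (hcs i.2).2
    · obtain ⟨s, hs⟩ := hne
      exact (sInter_subset_of_mem hs).trans (hcs hs).1.2.1
    · intro f hf k hk s hs
      exact (hcs hs).1.2.2 f hf k (hk s hs)
    · exact isClosed_sInter fun s hs => (hcs hs).2) _ ⟨hp.1, principal_closed hc g⟩
  refine ⟨L, ⟨hL.prop.1, ?_⟩, hLs.trans hp.2⟩
  intro L' hL' hsub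
  obtain ⟨k, hk⟩ := hL'.1
  have hq := principal hS hL' hk
  exact (hL.le_of_le ⟨hq.1, principal_closed hc k⟩ (hq.2.trans hsub)).trans hq.2

theorem kernel {X : Type*} [TopologicalSpace X] [CompactSpace X] [T2Space X]
    {S : Set (X → X)} (hc : IsClosed S) (hS : SemiG S) (hne : S.Nonempty) :
    IsKernelOf S (KK S) := by
  refine ⟨⟨?_, ?_, ?_⟩, ?_⟩
  · obtain ⟨L, hL, -⟩ := exists_min_s9 hc hS ⟨hne, subset_rfl, hS⟩
    obtain ⟨g, hg⟩ := hL.1.1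
    exact ⟨g, L, hL, hg⟩
  · rintro g ⟨L, hL, hg⟩; exact hL.1.2.1 hg
  · rintro f hf g ⟨L, hL, hg⟩
    refine ⟨⟨L, hL, hL.1.2.2 f hf g hg⟩, (fun k => k ∘ f) '' L, ⟨⟨⟨_, g, hg, rfl⟩, ?_, ?_⟩, ?_⟩,
      g, hg, rfl⟩
    · rintro _ ⟨k, hk, rfl⟩; exact hS k (hL.1.2.1 hk) f hf
    · rintro p hp _ ⟨k, hk, rfl⟩; exact ⟨p ∘ k, hL.1.2.2 p hp k hk, rfl⟩
    · rintro L' hL' hsub _ ⟨k, hk, rfl⟩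
      have := hL.2 {q | q ∈ L ∧ q ∘ f ∈ L'} ⟨?_, ?_, ?_⟩ (fun q hq => hq.1)
      · exact (this hk).2
      · obtain ⟨r, hr⟩ := hL'.1
        obtain ⟨q, hq, rfl⟩ := hsub hr
        exact ⟨q, hq, hr⟩
      · exact fun q hq => hL.1.2.1 hq.1
      · exact fun p hp q hq => ⟨hL.1.2.2 p hp q hq.1, hL'.2.2 p hp _ hq.2⟩
  · rintro I hI g ⟨L, hL, hg⟩
    obtain ⟨i, hi⟩ := hI.1
    have := hL.2 (I ∩ L) ⟨⟨i ∘ g, (hI.2.2 g (hL.1.2.1 hg) i hi).2,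
      hL.1.2.2 i (hI.2.1 hi) g hg⟩, fun q hq => hI.2.1 hq.1,
      fun p hp q hq => ⟨(hI.2.2 p hp q hq.1).1, hL.1.2.2 p hp q hq.2⟩⟩ inter_subset_right
    exact (this hg).1

theorem PP_semi {X : Type*} [TopologicalSpace X] (β : X ≃ₜ X) : SemiG (PP β) := by
  apply semi_closure
  · rintro _ ⟨n, rfl⟩; exact β.continuous.iterate n
  · rintro _ ⟨n, rfl⟩ _ ⟨m, rfl⟩; exact ⟨n + m, (Function.iterate_add _ _ _).symm⟩

theorem PP_comm {X : Type*} [TopologicalSpace X] [T2Space X] (β : X ≃ₜ X) :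
    ∀ f ∈ PP β, ⇑β ∘ f = f ∘ ⇑β := by
  intro f hf
  have : PP β ⊆ {f | ⇑β ∘ f = f ∘ ⇑β} := by
    apply closure_minimal
    · rintro _ ⟨n, rfl⟩
      exact (Function.iterate_succ' _ _).symm.trans (Function.iterate_succ _ _)
    · exact isClosed_eq (cont_left _ β.continuous) (cont_right _)
  exact this hf

theorem self_mem {X : Type*} [TopologicalSpace X] (β : X ≃ₜ X) : ⇑β ∈ PP β :=
  subset_closure ⟨1, rfl⟩

theorem min_lift {X : Type*} [TopologicalSpace X] [CompactSpace X] [T2Space X] (β : X ≃ₜ X)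
    {L : Set (X → X)} (hL : MinL (PP β) L) : MinL (PP β ∪ PP β.symm) L := by
  have hinv : ∀ g ∈ L, ⇑β.symm ∘ g ∈ L := by
    intro g hg
    have := hL.2 ((fun k => ⇑β ∘ k) '' L) ⟨hL.1.1.image _, ?_, ?_⟩ ?_
    · obtain ⟨k, hk, rfl⟩ := this hg
      convert hk using 1
      ext x; simp
    · rintro _ ⟨k, hk, rfl⟩; exact PP_semi β _ (self_mem β) _ (hL.1.2.1 hk)
    · rintro f hf _ ⟨k, hk, rfl⟩
      refine ⟨f ∘ k, hL.1.2.2 f hf k hk, ?_⟩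
      change (⇑β ∘ f) ∘ k = _
      rw [PP_comm β f hf]; rfl
    · rintro _ ⟨k, hk, rfl⟩; exact hL.1.2.2 _ (self_mem β) k hk
  have hit : ∀ n : ℕ, ∀ g ∈ L, (⇑β.symm)^[n] ∘ g ∈ L := by
    intro n
    induction n with
    | zero => intro g hg; exact hg
    | succ n ih =>
      intro g hg
      rw [Function.iterate_succ]
      exact ih _ (hinv g hg)
  have hcl : IsClosed L := min_closed isClosed_closure (PP_semi β) hL
  refine ⟨⟨hL.1.1, hL.1.2.1.trans subset_union_left, ?_⟩, ?_⟩
  · rintro f (hf | hf) g hg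
    · exact hL.1.2.2 f hf g hg
    · have : PP β.symm ⊆ (fun f => f ∘ g) ⁻¹' L := by
        apply closure_minimal
        · rintro _ ⟨n, rfl⟩; exact hit n g hg
        · exact hcl.preimage (cont_right g)
      exact this hf
  · intro L' hL' hsub
    exact hL.2 L' ⟨hL'.1, hsub.trans hL.1.2.1, fun f hf => hL'.2.2 f (Or.inl hf)⟩ hsub

theorem min_desc {X : Type*} [TopologicalSpace X] [CompactSpace X] [T2Space X] (β : X ≃ₜ X)
    {L : Set (X → X)} (hL : MinL (PP β ∪ PP β.symm) L) {w : X → X} (hw : w ∈ L)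
    (hwP : w ∈ PP β) : MinL (PP β) L := by
  have hp := (principal (PP_semi β) ⟨⟨w, hwP⟩, subset_rfl, PP_semi β⟩ hwP).1
  obtain ⟨L', hL', hs⟩ := exists_min_s9 isClosed_closure (PP_semi β) hp
  have hsub : L' ⊆ L := by
    intro q hq
    obtain ⟨f, hf, rfl⟩ := hs hq
    exact hL.1.2.2 f (Or.inl hf) w hw
  have : L = L' := (hL.2 L' (min_lift β hL').1 hsub).antisymm hsub
  rwa [this]

theorem KK_left {X : Type*} [TopologicalSpace X] [CompactSpace X] [T2Space X] (β : X ≃ₜ X) :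
    IsLeftIdealIn (PP β ∪ PP β.symm) (KK (PP β)) := by
  have hk := kernel isClosed_closure (PP_semi β) ⟨_, self_mem β⟩
  refine ⟨hk.1.1, hk.1.2.1.trans subset_union_left, ?_⟩
  rintro f hf g ⟨L, hL, hg⟩
  exact ⟨L, hL, (min_lift β hL).1.2.2 f hf g hg⟩

theorem zIter_eq {X : Type*} [TopologicalSpace X] (α : X ≃ₜ X) (n : ℤ) :
    zIter α n = ⇑((α.toEquiv : Equiv.Perm X) ^ n) := by
  unfold zIter
  split_ifs with h
  · obtain ⟨m, rfl⟩ := Int.eq_ofNat_of_zero_le h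
    rw [Int.toNat_natCast, zpow_natCast, ← Equiv.Perm.iterate_eq_pow]; rfl
  · obtain ⟨m, hm⟩ := Int.eq_ofNat_of_zero_le (by omega : 0 ≤ -n)
    obtain rfl : n = -(m : ℤ) := by omega
    rw [neg_neg, Int.toNat_natCast, zpow_neg, zpow_natCast, ← inv_pow,
      ← Equiv.Perm.iterate_eq_pow]; rfl

theorem E_eq {X : Type*} [TopologicalSpace X] (α : X ≃ₜ X) :
    closure {h : X → X | ∃ n : ℤ, h = zIter α n} = PP α ∪ PP α.symm := by
  unfold PP
  rw [← closure_union]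
  congr 1
  ext h
  constructor
  · rintro ⟨n, rfl⟩
    unfold zIter
    split_ifs
    · exact Or.inl ⟨_, rfl⟩
    · exact Or.inr ⟨_, rfl⟩
  · rintro (⟨n, rfl⟩ | ⟨n, rfl⟩)
    · exact ⟨n, by simp [zIter]⟩
    · refine ⟨-n, ?_⟩
      rw [zIter_eq, zpow_neg, zpow_natCast, ← inv_pow, ← Equiv.Perm.iterate_eq_pow]; rfl

theorem E_semi {X : Type*} [TopologicalSpace X] (α : X ≃ₜ X) : SemiG (PP α ∪ PP α.symm) := by
  rw [← E_eq]
  apply semi_closure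
  · rintro _ ⟨n, rfl⟩
    unfold zIter
    split_ifs
    · exact α.continuous.iterate _
    · exact α.symm.continuous.iterate _
  · rintro _ ⟨n, rfl⟩ _ ⟨m, rfl⟩
    refine ⟨n + m, ?_⟩
    rw [zIter_eq, zIter_eq, zIter_eq, zpow_add]; rfl

/-- For a homeomorphism `α` of a compact metric space, the kernels `M`, `M⁺`,
`M⁻` of `E`, `E⁺`, `E⁻` exist, `M = M⁺ ∪ M⁻`, and `M⁺`, `M⁻` are left ideals of `E`. -/
theorem stmt_9 {X : Type*} [MetricSpace X] [CompactSpace X] (α : X ≃ₜ X) :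
    ∃ M Mp Mm : Set (X → X),
      IsKernelOf (closure {h : X → X | ∃ n : ℤ, h = zIter α n}) M ∧
      IsKernelOf (closure {h : X → X | ∃ n : ℕ, h = (⇑α)^[n]}) Mp ∧
      IsKernelOf (closure {h : X → X | ∃ n : ℕ, h = (⇑α.symm)^[n]}) Mm ∧
      M = Mp ∪ Mm ∧
      IsLeftIdealIn (closure {h : X → X | ∃ n : ℤ, h = zIter α n}) Mp ∧
      IsLeftIdealIn (closure {h : X → X | ∃ n : ℤ, h = zIter α n}) Mm := by
  have hsw : PP α.symm ∪ PP α.symm.symm = PP α ∪ PP α.symm := union_comm _ _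
  rw [E_eq]
  refine ⟨KK (PP α ∪ PP α.symm), KK (PP α), KK (PP α.symm),
    kernel (isClosed_closure.union isClosed_closure) (E_semi α) ⟨_, Or.inl (self_mem α)⟩,
    kernel isClosed_closure (PP_semi α) ⟨_, self_mem α⟩,
    kernel isClosed_closure (PP_semi α.symm) ⟨_, self_mem α.symm⟩, ?_, KK_left α,
    hsw ▸ KK_left α.symm⟩
  ext f
  constructor
  · rintro ⟨L, hL, hf⟩
    rcases hL.1.2.1 hf with h | h
    · exact Or.inl ⟨L, min_desc α hL hf h, hf⟩
    · exact Or.inr ⟨L, min_desc α.symm (hsw.symm ▸ hL) hf h, hf⟩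
  · rintro (⟨L, hL, hf⟩ | ⟨L, hL, hf⟩)
    · exact ⟨L, min_lift α hL, hf⟩
    · exact ⟨L, hsw ▸ min_lift α.symm hL, hf⟩
end

section
/- Let A be a nonempty finite alphabet and X ⊆ A^ℤ a two-sided subshift, i.e., a nonempty closed subset of A^ℤ (product topology) with σ(X) = X, where σ is the left shift (σx)_n = x_{n+1}. Suppose x, y ∈ X form a forward Li-Yorke pair: they are forward proximal (for every N there is n₀ ≥ 0 with x_n = y_n for all n with n₀ < n ≤ n₀ + N) but not forward asymptotic (there is no n₀ such that x_n = y_n for all n > n₀). Then there exists f in E⁺, the closure of {σ^k restricted to X : k ∈ ℕ} in the self-maps of X with the product topology, such that f(x) ≠ f(y) but f(x) and f(y) are forward asymptotic; in particular f is not injective on its image and hence f is not completely regular (there is no g ∈ E⁺ with f ∘ g ∘ f = f and f ∘ g = g ∘ f). -/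
/-- The left shift on two-sided sequences. -/
def lshift {A : Type*} (x : ℤ → A) : ℤ → A := fun n => x (n + 1)

/-- Two two-sided sequences are forward asymptotic iff they eventually agree to the right. -/
def FwdAsympSeq {A : Type*} (x y : ℤ → A) : Prop :=
  ∃ n₀ : ℤ, ∀ n : ℤ, n₀ < n → x n = y n

/-- Two two-sided sequences are forward proximal iff they agree on arbitrarily long
segments to the right. -/
def FwdProxSeq {A : Type*} (x y : ℤ → A) : Prop :=
  ∀ N : ℕ, ∃ n₀ : ℤ, 0 ≤ n₀ ∧ ∀ n : ℤ, n₀ < n → n ≤ n₀ + (N : ℤ) → x n = y n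

lemma lshift_iter {A : Type*} (k : ℕ) (p : ℤ → A) (n : ℤ) : lshift^[k] p n = p (n + k) := by
  induction k generalizing p with
  | zero => simp
  | succ k ih =>
    rw [Function.iterate_succ_apply, ih]
    simp only [lshift]
    congr 1
    push_cast
    ring

lemma exists_times {A : Type*} (x y : ℤ → A) (hprox : FwdProxSeq x y)
    (hn : ¬FwdAsympSeq x y) (N : ℕ) :
    ∃ k : ℕ, N ≤ k ∧ x k ≠ y k ∧ ∀ n : ℤ, 0 < n → n ≤ N → x (n + k) = y (n + k) := by
  classical
  have h1 : ∃ d : ℤ, (N : ℤ) < d ∧ x d ≠ y d := by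
    by_contra hc
    push Not at hc
    exact hn ⟨N, hc⟩
  obtain ⟨d, hd, hxd⟩ := h1
  obtain ⟨n0, hn0, hag⟩ := hprox (d.toNat + N)
  have hdn : d ≤ n0 := by
    by_contra hc
    push Not at hc
    exact hxd (hag d hc (by push_cast; omega))
  obtain ⟨m, ⟨hm1, hm2⟩, hm3⟩ := Int.exists_greatest_of_bdd
    (P := fun z => z ≤ n0 ∧ x z ≠ y z) ⟨n0, fun z hz => hz.1⟩ ⟨d, hdn, hxd⟩
  have hdm : d ≤ m := hm3 d ⟨hdn, hxd⟩
  have hmm : ((m.toNat : ℕ) : ℤ) = m := by omega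
  refine ⟨m.toNat, by omega, by rw [hmm]; exact hm2, ?_⟩
  intro n h0 hN
  rw [hmm]
  by_cases hc : n + m ≤ n0
  · by_contra hne
    have := hm3 (n + m) ⟨hc, hne⟩
    omega
  · exact hag _ (by omega) (by push_cast; omega)

/-- In a two-sided subshift, a forward Li-Yorke pair `x, y` gives rise to an
element `F` of `E⁺` (the closure of the restricted shift powers) with `F x ≠ F y` but
`F x`, `F y` forward asymptotic; in particular `F` is not injective on its image and not
completely regular. -/
theorem stmt_17 {A : Type*} [Fintype A] [Nonempty A]
    [TopologicalSpace A] [DiscreteTopology A]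
    (X : Set (ℤ → A)) (hXne : X.Nonempty) (hXcl : IsClosed X)
    (hXinv : lshift '' X = X)
    (x y : ℤ → A) (hx : x ∈ X) (hy : y ∈ X)
    (hprox : FwdProxSeq x y) (hnasymp : ¬FwdAsympSeq x y) :
    ∃ F : X → X,
      F ∈ closure {G : X → X |
        ∃ k : ℕ, ∀ p : X, (G p : ℤ → A) = lshift^[k] (p : ℤ → A)} ∧
      F ⟨x, hx⟩ ≠ F ⟨y, hy⟩ ∧
      FwdAsympSeq (F ⟨x, hx⟩ : ℤ → A) (F ⟨y, hy⟩ : ℤ → A) ∧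
      ¬Set.InjOn F (Set.range F) ∧
      ¬∃ G ∈ closure {G : X → X |
          ∃ k : ℕ, ∀ p : X, (G p : ℤ → A) = lshift^[k] (p : ℤ → A)},
        F ∘ G ∘ F = F ∧ F ∘ G = G ∘ F := by
  classical
  have hmaps : ∀ p ∈ X, lshift p ∈ X := fun p hp => hXinv ▸ Set.mem_image_of_mem _ hp
  have hiter : ∀ (k : ℕ) (p : X), lshift^[k] (p : ℤ → A) ∈ X := by
    intro k
    induction k with
    | zero => intro p; exact p.2
    | succ k ih => intro p; rw [Function.iterate_succ_apply]; exact ih ⟨_, hmaps _ p.2⟩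
  have : CompactSpace X := isCompact_iff_compactSpace.mp hXcl.isCompact
  choose k hkN hkne hkeq using exists_times x y hprox hnasymp
  let S : ℕ → X → X := fun N p => ⟨lshift^[k N] (p : ℤ → A), hiter _ p⟩
  let U : Ultrafilter ℕ := Filter.hyperfilter ℕ
  obtain ⟨F, -, hF⟩ := isCompact_univ.ultrafilter_le_nhds (U.map S)
    (by simp)
  have hT : Filter.Tendsto S U (nhds F) := hF
  have hU : ∀ M : ℕ, ∀ᶠ N in (U : Filter ℕ), M ≤ N := fun M =>
    (Nat.hyperfilter_le_atTop) (Filter.eventually_ge_atTop M)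
  have hco : ∀ (p : X) (n : ℤ), ∀ᶠ N in (U : Filter ℕ),
      (p : ℤ → A) (n + k N) = (F p : ℤ → A) n := by
    intro p n
    have h1 : Filter.Tendsto (fun N => (S N p : ℤ → A) n) U (nhds ((F p : ℤ → A) n)) :=
      ((show Continuous (fun H : X → X => (H p : ℤ → A) n) from
        (continuous_apply n).comp (continuous_subtype_val.comp (continuous_apply p))).tendsto F).comp hT
    rw [nhds_discrete, Filter.tendsto_pure] at h1
    filter_upwards [h1] with N hN
    rw [← hN]
    exact (lshift_iter (k N) (p : ℤ → A) n).symm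
  have hne : F ⟨x, hx⟩ ≠ F ⟨y, hy⟩ := by
    intro h
    obtain ⟨N, h1, h2⟩ := ((hco ⟨x, hx⟩ 0).and (hco ⟨y, hy⟩ 0)).exists
    rw [h, ← h2] at h1
    simp only [zero_add] at h1
    exact hkne N h1
  have has : FwdAsympSeq (F ⟨x, hx⟩ : ℤ → A) (F ⟨y, hy⟩ : ℤ → A) := by
    refine ⟨0, fun n hn => ?_⟩
    obtain ⟨N, ⟨h1, h2⟩, h3⟩ :=
      (((hco ⟨x, hx⟩ n).and (hco ⟨y, hy⟩ n)).and (hU n.toNat)).exists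
    rw [← h1, ← h2]
    exact hkeq N n hn (by omega)
  have hcol : ∀ p q : X, FwdAsympSeq (p : ℤ → A) (q : ℤ → A) → F p = F q := by
    rintro p q ⟨n0, h0⟩
    apply Subtype.ext
    funext n
    obtain ⟨N, ⟨h1, h2⟩, h3⟩ :=
      (((hco p n).and (hco q n)).and (hU (n0 - n + 1).toNat)).exists
    rw [← h1, ← h2]
    have := hkN N
    exact h0 _ (by omega)
  have hFF := hcol _ _ has
  refine ⟨F, mem_closure_of_tendsto hT (Filter.Eventually.of_forall fun N => ⟨k N, fun p => rfl⟩),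
    hne, has, fun hinj => hne (hinj ⟨_, rfl⟩ ⟨_, rfl⟩ hFF), ?_⟩
  rintro ⟨G, -, h1, h2⟩
  apply hne
  have key : ∀ p, G (F (F p)) = F p := fun p => by
    have a := congrFun h1 p
    have b := congrFun h2 (F p)
    simp only [Function.comp] at a b
    rw [← b, a]
  rw [← key ⟨x, hx⟩, ← key ⟨y, hy⟩, hFF]
end

section
/- Let X be a totally disconnected compact metric space (a compact metric space with a basis of clopen sets) and α : X → X a continuous surjection. If the system admits a forward Li-Yorke pair, i.e., points x, y which are forward proximal but not forward asymptotic, then E⁺ = closure{α^n : n ∈ ℕ} (in the self-maps of X with the product topology) is not completely regular: there exists f ∈ E⁺ for which no g ∈ E⁺ satisfies f ∘ g ∘ f = f and f ∘ g = g ∘ f. -/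
/-- If a continuous surjection `α` of a totally disconnected compact metric
space (one with a basis of clopen sets) admits a forward Li-Yorke pair (a forward proximal
pair which is not forward asymptotic), then `E⁺ = closure {α^n : n ∈ ℕ}` is not completely
regular: some `f ∈ E⁺` admits no `g ∈ E⁺` with `f ∘ g ∘ f = f` and `f ∘ g = g ∘ f`. -/
theorem stmt_18 {X : Type*} [MetricSpace X] [CompactSpace X]
    (hbasis : ∃ B : Set (Set X),
      (∀ U ∈ B, IsClopen U) ∧ TopologicalSpace.IsTopologicalBasis B)
    (α : X → X) (hcont : Continuous α) (hsurj : Function.Surjective α)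
    (x y : X)
    (hprox : ∀ ε > 0, ∃ n : ℕ, dist (α^[n] x) (α^[n] y) < ε)
    (hnasymp : ¬Filter.Tendsto (fun n : ℕ => dist (α^[n] x) (α^[n] y))
      Filter.atTop (nhds 0)) :
    ∃ f ∈ closure {h : X → X | ∃ n : ℕ, h = α^[n]},
      ¬∃ g ∈ closure {h : X → X | ∃ n : ℕ, h = α^[n]},
        f ∘ g ∘ f = f ∧ f ∘ g = g ∘ f := by
  classical
  obtain ⟨B, hB, hbas⟩ := hbasis
  have hxy : x ≠ y := by
    rintro rfl
    apply hnasymp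
    simp
  obtain ⟨U, hUB, hxU, hUy⟩ := hbas.exists_subset_of_mem_open
    (show x ∈ ({y}ᶜ : Set X) from hxy) isOpen_compl_singleton
  have hyU : y ∉ U := fun h => hUy h rfl
  have hU : IsClopen U := hB U hUB
  have hV : IsClopen {z : X × X | z.1 ∈ U ↔ z.2 ∈ U} := by
    have h1 : IsClopen {z : X × X | z.1 ∈ U} := hU.preimage continuous_fst
    have h2 : IsClopen {z : X × X | z.2 ∈ U} := hU.preimage continuous_snd
    have : {z : X × X | z.1 ∈ U ↔ z.2 ∈ U} =
        ({z : X × X | z.1 ∈ U} ∩ {z : X × X | z.2 ∈ U}) ∪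
        ({z : X × X | z.1 ∈ U}ᶜ ∩ {z : X × X | z.2 ∈ U}ᶜ) := by
      ext z
      simp only [Set.mem_ofPred_eq, Set.mem_union, Set.mem_inter_iff, Set.mem_compl_iff]
      tauto
    rw [this]
    exact (h1.inter h2).union (h1.compl.inter h2.compl)
  have hVi : ∀ i : ℕ, IsClopen {z : X × X | α^[i] z.1 ∈ U ↔ α^[i] z.2 ∈ U} := fun i =>
    hV.preimage (((hcont.iterate i).comp continuous_fst).prodMk
      ((hcont.iterate i).comp continuous_snd))
  have hstretch : ∀ k : ℕ, ∃ n : ℕ, ∀ i ≤ k, (α^[i + n] x ∈ U ↔ α^[i + n] y ∈ U) := by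
    intro k
    have hmem : ∀ i ∈ Finset.range (k + 1),
        {z : X × X | α^[i] z.1 ∈ U ↔ α^[i] z.2 ∈ U} ∈ uniformity X := by
      intro i _
      rw [← nhdsSet_diagonal_eq_uniformity, (hVi i).isOpen.mem_nhdsSet]
      rintro ⟨a, b⟩ hab
      have : a = b := hab
      simp [this]
    have hall := (Filter.biInter_finset_mem (Finset.range (k + 1))).2 hmem
    obtain ⟨ε, hε, hs⟩ := Metric.mem_uniformity_dist.1 hall
    obtain ⟨n, hn⟩ := hprox ε hε
    refine ⟨n, fun i hi => ?_⟩
    have h := hs hn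
    simp only [Set.mem_iInter] at h
    have h2 := h i (Finset.mem_range.2 (by omega))
    simpa [Function.iterate_add_apply] using h2
  let K : ℕ → Set (X × X) := fun k => {z | z.1 ∈ U ↔ z.2 ∈ U}ᶜ ∩
    ⋂ i : ℕ, ⋂ _ : i < k, {z : X × X | α^[i + 1] z.1 ∈ U ↔ α^[i + 1] z.2 ∈ U}
  have hKc : ∀ k, IsClosed (K k) := fun k => hV.compl.isClosed.inter
    (isClosed_iInter fun i => isClosed_iInter fun _ => (hVi (i + 1)).isClosed)
  have hKne : ∀ k, (K k).Nonempty := by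
    intro k
    obtain ⟨n, hn⟩ := hstretch k
    let P : ℕ → Prop := fun j => ¬ (α^[j] x ∈ U ↔ α^[j] y ∈ U)
    have hP0 : P 0 := by simp [P, hxU, hyU]
    have hPj : P (Nat.findGreatest P n) := Nat.findGreatest_spec (Nat.zero_le n) hP0
    have hgt : ∀ m, Nat.findGreatest P n < m → m ≤ n → ¬ P m := fun m h1 h2 =>
      Nat.findGreatest_is_greatest h1 h2
    have hle : Nat.findGreatest P n ≤ n := Nat.findGreatest_le n
    generalize Nat.findGreatest P n = j at hPj hgt hle
    refine ⟨(α^[j] x, α^[j] y), hPj, ?_⟩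
    simp only [Set.mem_iInter, Set.mem_ofPred_eq]
    intro i hi
    rw [← Function.iterate_add_apply, ← Function.iterate_add_apply]
    by_cases hc : i + 1 + j ≤ n
    · exact not_not.1 (hgt (i + 1 + j) (by omega) hc)
    · have h := hn (i + 1 + j - n) (by omega)
      rwa [Nat.sub_add_cancel (by omega)] at h
  obtain ⟨⟨p, q⟩, hpq⟩ := IsCompact.nonempty_iInter_of_sequence_nonempty_isCompact_isClosed K
    (fun k z hz => ⟨hz.1, by
      have := hz.2
      simp only [Set.mem_iInter] at this ⊢
      exact fun i hi => this i (by omega)⟩)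
    hKne (hKc 0).isCompact hKc
  rw [Set.mem_iInter] at hpq
  have hne : ¬ (p ∈ U ↔ q ∈ U) := (hpq 0).1
  have hag : ∀ i : ℕ, α^[i + 1] p ∈ U ↔ α^[i + 1] q ∈ U := by
    intro i
    have h := (hpq (i + 1)).2
    simp only [Set.mem_iInter] at h
    exact h i (by omega)
  refine ⟨α, subset_closure ⟨1, by simp⟩, ?_⟩
  rintro ⟨g, hg, h1, h2⟩
  have hid : ∀ z, g (α z) = z := by
    intro z
    obtain ⟨w, rfl⟩ := hsurj z
    have e1 := congrFun h1 w
    have e2 := congrFun h2 (α w)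
    simp only [Function.comp_apply] at e1 e2
    rw [← e2, e1]
  have hcl : IsClosed {h : X → X | h (α p) ∈ U ↔ h (α q) ∈ U} := by
    have hc : Continuous (fun h : X → X => (h (α p), h (α q))) :=
      (continuous_apply (α p)).prodMk (continuous_apply (α q))
    exact hV.isClosed.preimage hc
  have hgm := closure_minimal (s := {h : X → X | ∃ n : ℕ, h = α^[n]}) (by
    rintro h ⟨n, rfl⟩
    exact hag n) hcl hg
  apply hne
  simpa [hid] using hgm
end
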